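/- There exists a slowly varying, monotone decreasing, differentiable function γ on (0,∞) such that E[|X|^r; |X| > t] = o(γ(t) t^{r−2}) as t → ∞, and ∫_1^∞ γ(x)/x dx < ∞. -/

import Mathlib

open MeasureTheory ProbabilityTheory Filter
open scoped RealInnerProductSpace

namespace GammaAux

/-- the kernel -/
noncomputable def ker (s y : ℝ) : ℝ := y ^ 2 / (y ^ 2 + s ^ 2)

lemma ker_nonneg (s y : ℝ) : 0 ≤ ker s y := by unfold ker; positivity

lemma ker_le_one (s y : ℝ) : ker s y ≤ 1 := by
  unfold ker
  apply div_le_one_of_le₀ <;> nlinarith [sq_nonneg s, sq_nonneg y]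

lemma ker_meas : Measurable (fun p : ℝ × ℝ => ker p.1 p.2) := by
  unfold ker; fun_prop

lemma ker_meas' (s : ℝ) : Measurable (ker s) := by
  unfold ker; fun_prop

lemma ker_int (ν : Measure ℝ) [IsFiniteMeasure ν] (s : ℝ) : Integrable (ker s) ν := by
  refine Integrable.mono' (integrable_const (1 : ℝ)) (ker_meas' s).aestronglyMeasurable ?_
  refine Eventually.of_forall fun y => ?_
  rw [Real.norm_of_nonneg (ker_nonneg s y)]
  exact ker_le_one s y

/-- averaged kernel -/
noncomputable def gg (ν : Measure ℝ) (s : ℝ) : ℝ := ∫ y, ker s y ∂ν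

lemma gg_anti (ν : Measure ℝ) [IsFiniteMeasure ν] (hν : ∀ᵐ y ∂ν, 1 ≤ y) {s s' : ℝ}
    (hs : 0 < s) (hss : s ≤ s') : gg ν s' ≤ gg ν s := by
  refine integral_mono_ae (ker_int ν _) (ker_int ν _) ?_
  filter_upwards [hν] with y hy
  unfold ker
  gcongr

lemma gg_sq (ν : Measure ℝ) [IsFiniteMeasure ν] (hν : ∀ᵐ y ∂ν, 1 ≤ y) {s s' : ℝ}
    (hs : 0 < s) (hss : s ≤ s') : s ^ 2 * gg ν s ≤ s' ^ 2 * gg ν s' := by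
  unfold gg
  rw [← integral_const_mul, ← integral_const_mul]
  refine integral_mono_ae ((ker_int ν _).const_mul _) ((ker_int ν _).const_mul _) ?_
  filter_upwards [hν] with y hy
  unfold ker
  have h1 : s ^ 2 ≤ s' ^ 2 := by gcongr
  have hy2 : 0 < y ^ 2 := by positivity
  rw [← mul_div_assoc, ← mul_div_assoc, div_le_div_iff₀ (by positivity) (by positivity)]
  nlinarith [mul_le_mul_of_nonneg_left h1 (by positivity : 0 ≤ y ^ 2 * y ^ 2)]

lemma gg_pos (ν : Measure ℝ) [IsFiniteMeasure ν] (hν : ∀ᵐ y ∂ν, 1 ≤ y) (h0 : ν ≠ 0) {s : ℝ}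
    (hs : 0 < s) : 0 < gg ν s := by
  unfold gg
  rw [integral_pos_iff_support_of_nonneg (ker_nonneg s) (ker_int ν s)]
  have : (Function.support (ker s)) =ᵐ[ν] Set.univ := by
    rw [eventuallyEq_univ]
    filter_upwards [hν] with y hy
    have : 0 < y := by linarith
    simp only [Function.mem_support, ker]
    positivity
  rw [measure_congr this]
  exact (Measure.measure_univ_pos).2 h0

lemma gg_diff (ν : Measure ℝ) [IsFiniteMeasure ν] (hν : ∀ᵐ y ∂ν, 1 ≤ y) (s : ℝ) :
    DifferentiableAt ℝ (gg ν) s := by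
  have := hasDerivAt_integral_of_dominated_loc_of_deriv_le (μ := ν) (𝕜 := ℝ)
    (F := ker) (x₀ := s) (s := Set.univ) (bound := fun _ => (1 : ℝ))
    (F' := fun s y => - (y ^ 2 * (2 * s)) / (y ^ 2 + s ^ 2) ^ 2) univ_mem
    (Eventually.of_forall fun s => (ker_meas' s).aestronglyMeasurable) (ker_int ν s)
    (Measurable.aestronglyMeasurable (by fun_prop)) ?_ (integrable_const _) ?_
  · exact this.2.differentiableAt
  · filter_upwards [hν] with y hy x _
    have hp : 0 < y ^ 2 + x ^ 2 := by positivity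
    have hy2 : 1 ≤ y ^ 2 := by nlinarith
    rw [Real.norm_eq_abs, abs_div, abs_of_pos (pow_pos hp 2)]
    apply div_le_one_of_le₀ _ (by positivity)
    rw [abs_le]
    constructor <;> nlinarith [mul_nonneg (sub_nonneg.2 hy2) (sq_nonneg x),
      mul_nonneg (sq_nonneg y) (sq_nonneg (x - 1)), mul_nonneg (sq_nonneg y) (sq_nonneg (x + 1)),
      mul_nonneg (sq_nonneg y) (sq_nonneg x), sq_nonneg (x ^ 2),
      mul_nonneg (sq_nonneg y) (sub_nonneg.2 hy2)]
  · filter_upwards [hν] with y hy x _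
    have hp : y ^ 2 + x ^ 2 ≠ 0 := by positivity
    unfold ker
    have h1 : HasDerivAt (fun x : ℝ => y ^ 2 + x ^ 2) (2 * x) x := by
      simpa using ((hasDerivAt_id x).pow 2).const_add (y ^ 2)
    have := (hasDerivAt_const x (y ^ 2)).div h1 hp
    have he : -(y ^ 2 * (2 * x)) / (y ^ 2 + x ^ 2) ^ 2 =
        (0 * (y ^ 2 + x ^ 2) - y ^ 2 * (2 * x)) / (y ^ 2 + x ^ 2) ^ 2 := by ring
    rw [he]
    exact this

lemma ker_x_int {y : ℝ} (hy : 1 ≤ y) :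
    IntegrableOn (fun x => ker (Real.log (1 + x)) y / x) (Set.Ioi 1) ∧
    ∫ x in Set.Ioi 1, ker (Real.log (1 + x)) y / x ≤ 4 * y := by
  have hy0 : 0 < y := by linarith
  set G : ℝ → ℝ := fun x => 2 * (y * Real.arctan (Real.log (1 + x) / y))
  set G' : ℝ → ℝ := fun x => 2 * (ker (Real.log (1 + x)) y / (1 + x))
  have hd : ∀ x : ℝ, 1 ≤ x → HasDerivAt G (G' x) x := by
    intro x hx
    have h1 : HasDerivAt (fun x : ℝ => 1 + x) 1 x := (hasDerivAt_id x).const_add 1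
    have h2 := ((((h1.log (by positivity)).div_const y).arctan).const_mul y).const_mul 2
    have he : G' x = 2 * (y * (1 / (1 + (Real.log (1 + x) / y) ^ 2) * (1 / (1 + x) / y))) := by
      simp only [G', ker]
      field_simp
    rw [he]
    exact h2
  have hc : ContinuousWithinAt G (Set.Ici 1) 1 := (hd 1 le_rfl).continuousAt.continuousWithinAt
  have hd' : ∀ x ∈ Set.Ioi (1 : ℝ), HasDerivAt G (G' x) x := fun x hx => hd x (le_of_lt hx)
  have hn : ∀ x ∈ Set.Ioi (1 : ℝ), 0 ≤ G' x := by
    intro x hx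
    have : (1 : ℝ) < x := hx
    have := ker_nonneg (Real.log (1 + x)) y
    simp only [G']
    positivity
  have hl : Tendsto G atTop (nhds (2 * (y * (Real.pi / 2)))) := by
    have h1 : Tendsto (fun x : ℝ => Real.log (1 + x) / y) atTop atTop :=
      (Real.tendsto_log_atTop.comp (tendsto_atTop_add_const_left _ _ tendsto_id)).atTop_div_const hy0
    have h2 : Tendsto Real.arctan atTop (nhds (Real.pi / 2)) :=
      tendsto_nhds_of_tendsto_nhdsWithin Real.tendsto_arctan_atTop
    exact ((h2.comp h1).const_mul y).const_mul 2
  have hI := integrableOn_Ioi_deriv_of_nonneg hc hd' hn hl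
  have hE := integral_Ioi_of_hasDerivAt_of_nonneg hc hd' hn hl
  have hle : ∀ x ∈ Set.Ioi (1 : ℝ), ker (Real.log (1 + x)) y / x ≤ G' x := by
    intro x hx
    have hx : (1 : ℝ) < x := hx
    have hk := ker_nonneg (Real.log (1 + x)) y
    simp only [G']
    rw [← mul_div_assoc, div_le_div_iff₀ (by positivity) (by positivity)]
    nlinarith
  have hI2 : IntegrableOn (fun x => ker (Real.log (1 + x)) y / x) (Set.Ioi 1) := by
    refine Integrable.mono' hI (Measurable.aestronglyMeasurable (by unfold ker; fun_prop)) ?_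
    refine (ae_restrict_iff' measurableSet_Ioi).2 (Eventually.of_forall fun x hx => ?_)
    have hx' : (1 : ℝ) < x := hx
    rw [Real.norm_of_nonneg (div_nonneg (ker_nonneg _ _) (by linarith))]
    exact hle x hx
  refine ⟨hI2, (setIntegral_mono_on hI2 hI measurableSet_Ioi hle).trans ?_⟩
  rw [hE]
  have h3 : 0 ≤ G 1 := by
    have h4 : 0 ≤ Real.log (1 + 1) := Real.log_nonneg (by norm_num)
    have : 0 ≤ Real.arctan (Real.log (1 + 1) / y) := Real.arctan_nonneg.2 (by positivity)
    simp only [G]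
    positivity
  nlinarith [Real.pi_le_four]

lemma gg_integrable (ν : Measure ℝ) [IsFiniteMeasure ν] (hν : ∀ᵐ y ∂ν, 1 ≤ y)
    (hi : Integrable (fun y : ℝ => y) ν) :
    IntegrableOn (fun x => gg ν (Real.log (1 + x)) / x) (Set.Ioi 1) := by
  set F : ℝ × ℝ → ℝ := fun p => ker (Real.log (1 + p.1)) p.2 / p.1
  have hF : Measurable F := by simp only [F]; unfold ker; fun_prop
  have hF' : Integrable F ((volume.restrict (Set.Ioi 1)).prod ν) := by
    rw [integrable_prod_iff' hF.aestronglyMeasurable]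
    constructor
    · filter_upwards [hν] with y hy
      exact (ker_x_int hy).1
    · refine Integrable.mono' (hi.const_mul 4) ?_ ?_
      · have : Measurable (fun q : ℝ × ℝ => ‖F (q.2, q.1)‖) := by fun_prop
        exact AEStronglyMeasurable.integral_prod_right' (f := fun q : ℝ × ℝ => ‖F (q.2, q.1)‖)
          this.aestronglyMeasurable
      · filter_upwards [hν] with y hy
        rw [Real.norm_of_nonneg (integral_nonneg fun x => norm_nonneg _)]
        refine le_trans (le_of_eq ?_) (ker_x_int hy).2
        refine setIntegral_congr_fun measurableSet_Ioi fun x hx => ?_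
        have hx' : (1 : ℝ) < x := hx
        exact Real.norm_of_nonneg (div_nonneg (ker_nonneg _ _) (by linarith))
  have := hF'.integral_prod_left
  refine Integrable.congr this (Eventually.of_forall fun x => ?_)
  simp only [F, gg]
  rw [integral_div]

lemma log_ratio {l : ℝ} (hl : 0 < l) :
    Tendsto (fun t : ℝ => Real.log (1 + t) / Real.log (1 + l * t)) atTop (nhds 1) := by
  have hlt : Tendsto (fun t : ℝ => 1 + l * t) atTop atTop :=
    tendsto_atTop_add_const_left _ _ (tendsto_id.const_mul_atTop hl)
  have h1 : Tendsto (fun t : ℝ => (1 + t) / (1 + l * t)) atTop (nhds l⁻¹) := by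
    have h2 : Tendsto (fun t : ℝ => l⁻¹ + (1 - l⁻¹) * (1 + l * t)⁻¹) atTop
        (nhds (l⁻¹ + (1 - l⁻¹) * 0)) :=
      ((tendsto_inv_atTop_zero.comp hlt).const_mul _).const_add _
    rw [mul_zero, add_zero] at h2
    refine h2.congr' ?_
    filter_upwards [eventually_gt_atTop 0] with t ht
    field_simp
    ring
  have h3 := (h1.log (by positivity)).div_atTop (Real.tendsto_log_atTop.comp hlt)
  have h4 := h3.const_add 1
  rw [add_zero] at h4
  refine h4.congr' ?_
  filter_upwards [eventually_gt_atTop 0] with t ht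
  have h5 : 0 < 1 + l * t := by positivity
  have h6 : 0 < Real.log (1 + l * t) := Real.log_pos (by nlinarith [mul_pos hl ht])
  simp only [Function.comp]
  rw [Real.log_div (by positivity) (by positivity), sub_div, div_self h6.ne']
  ring

lemma gg_ratio (ν : Measure ℝ) [IsFiniteMeasure ν] (hν : ∀ᵐ y ∂ν, 1 ≤ y) (h0 : ν ≠ 0)
    {l : ℝ} (hl : 0 < l) :
    Tendsto (fun t => gg ν (Real.log (1 + l * t)) / gg ν (Real.log (1 + t))) atTop (nhds 1) := by
  have hr := (log_ratio hl).pow 2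
  rw [one_pow] at hr
  have hlo := (tendsto_const_nhds (x := (1 : ℝ))).min hr
  have hhi := (tendsto_const_nhds (x := (1 : ℝ))).max hr
  rw [min_self] at hlo
  rw [max_self] at hhi
  have key : ∀ t : ℝ, 0 < t →
      min 1 ((Real.log (1 + t) / Real.log (1 + l * t)) ^ 2) ≤
        gg ν (Real.log (1 + l * t)) / gg ν (Real.log (1 + t)) ∧
      gg ν (Real.log (1 + l * t)) / gg ν (Real.log (1 + t)) ≤
        max 1 ((Real.log (1 + t) / Real.log (1 + l * t)) ^ 2) := by
    intro t ht
    have hs' : 0 < Real.log (1 + l * t) := Real.log_pos (by nlinarith [mul_pos hl ht])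
    have hs : 0 < Real.log (1 + t) := Real.log_pos (by linarith)
    generalize Real.log (1 + l * t) = s' at *
    generalize Real.log (1 + t) = s at *
    have hg := gg_pos ν hν h0 hs
    have hg' := gg_pos ν hν h0 hs'
    rcases le_total s s' with h | h
    · have a := gg_anti ν hν hs h
      have b := gg_sq ν hν hs h
      constructor
      · refine (min_le_right _ _).trans ?_
        rw [div_pow, div_le_div_iff₀ (by positivity) hg]
        linarith
      · exact (div_le_one_of_le₀ a hg.le).trans (le_max_left _ _)
    · have a := gg_anti ν hν hs' h
      have b := gg_sq ν hν hs' h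
      constructor
      · exact (min_le_left _ _).trans ((one_le_div hg).2 a)
      · refine le_trans ?_ (le_max_right _ _)
        rw [div_pow, div_le_div_iff₀ hg (by positivity)]
        linarith
  refine tendsto_of_tendsto_of_tendsto_of_le_of_le' hlo hhi ?_ ?_
  · filter_upwards [eventually_gt_atTop 0] with t ht using (key t ht).1
  · filter_upwards [eventually_gt_atTop 0] with t ht using (key t ht).2

lemma gg_lower (ν : Measure ℝ) [IsFiniteMeasure ν] {s : ℝ} (hs : 0 < s) :
    (ν (Set.Ioi s)).toReal / 2 ≤ gg ν s := by
  have h1 : ∫ y in Set.Ioi s, (1 / 2 : ℝ) ∂ν ≤ ∫ y in Set.Ioi s, ker s y ∂ν := by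
    refine setIntegral_mono_on (integrable_const _) (ker_int ν s).integrableOn measurableSet_Ioi ?_
    intro y hy
    have hy : s < y := hy
    unfold ker
    rw [div_le_div_iff₀ (by norm_num) (by positivity)]
    nlinarith
  have h2 : ∫ y in Set.Ioi s, ker s y ∂ν ≤ gg ν s :=
    setIntegral_le_integral (ker_int ν s) (Eventually.of_forall (ker_nonneg s))
  have h3 : ∫ y in Set.Ioi s, (1 / 2 : ℝ) ∂ν = (ν (Set.Ioi s)).toReal / 2 := by
    rw [setIntegral_const, smul_eq_mul, Measure.real]
    ring
  linarith

/-- The measure construction. -/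
lemma exists_nu (ρ : Measure ℝ) (hρ : ∫⁻ y, ENNReal.ofReal y ∂ρ ≠ ⊤) :
    ∃ ν : Measure ℝ, IsFiniteMeasure ν ∧ (∀ᵐ y ∂ν, 1 ≤ y) ∧ ν ≠ 0 ∧
      Integrable (fun y : ℝ => y) ν ∧
      ∀ N : ℕ, ∀ᶠ s in atTop, (N : ENNReal) * ρ (Set.Ioi s) ≤ ν (Set.Ioi s) := by
  set m := ρ.withDensity (fun y => ENNReal.ofReal y)
  have hm : IsFiniteMeasure m := isFiniteMeasure_withDensity hρ
  have hlim : Tendsto (fun n : ℕ => m (Set.Ioi (n : ℝ))) atTop (nhds 0) := by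
    have := tendsto_measure_iInter_atTop (μ := m) (s := fun n : ℕ => Set.Ioi (n : ℝ))
      (fun i => measurableSet_Ioi.nullMeasurableSet)
      (fun i j hij => Set.Ioi_subset_Ioi (by exact_mod_cast hij)) ⟨0, measure_ne_top _ _⟩
    have he : (⋂ n : ℕ, Set.Ioi (n : ℝ)) = ∅ := by
      ext x
      simp only [Set.mem_iInter, Set.mem_Ioi, Set.mem_empty_iff_false, iff_false, not_forall, not_lt]
      exact exists_nat_ge x
    rw [he, measure_empty] at this
    exact this
  have hex : ∀ n : ℕ, ∃ a : ℝ, 1 ≤ a ∧ m (Set.Ioi a) ≤ (2⁻¹ : ENNReal) ^ n := by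
    intro n
    have hpos : (0 : ENNReal) < (2⁻¹ : ENNReal) ^ n :=
      ENNReal.pow_pos (ENNReal.inv_pos.2 (by simp)) n
    obtain ⟨k, hk1, hk2⟩ := ((hlim.eventually (gt_mem_nhds hpos)).and (eventually_ge_atTop 1)).exists
    exact ⟨k, by exact_mod_cast hk2, hk1.le⟩
  choose a ha1 ha2 using hex
  set ν := Measure.sum (fun n => ρ.restrict (Set.Ioi (a n))) + Measure.dirac 1
  have hν1 : ∀ᵐ y ∂ν, 1 ≤ y := by
    rw [ae_add_measure_iff]
    constructor
    · rw [Measure.ae_sum_iff]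
      intro n
      refine (ae_restrict_iff' measurableSet_Ioi).2 (Eventually.of_forall fun y hy => ?_)
      exact (ha1 n).trans (le_of_lt hy)
    · rw [ae_dirac_iff measurableSet_Ici]
  have hfin : ∫⁻ y, ENNReal.ofReal y ∂ν < ⊤ := by
    rw [lintegral_add_measure, lintegral_sum_measure, lintegral_dirac' _ (by fun_prop)]
    refine ENNReal.add_lt_top.2 ⟨?_, by simp⟩
    calc ∑' n, ∫⁻ y in Set.Ioi (a n), ENNReal.ofReal y ∂ρ
        ≤ ∑' n : ℕ, (2⁻¹ : ENNReal) ^ n := by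
          refine ENNReal.tsum_le_tsum fun n => ?_
          rw [← withDensity_apply _ measurableSet_Ioi]
          exact ha2 n
      _ < ⊤ := by
          rw [ENNReal.tsum_geometric, ENNReal.one_sub_inv_two, inv_inv]
          simp
  have hint : Integrable (fun y : ℝ => y) ν := by
    refine ⟨by fun_prop, ?_⟩
    refine lt_of_le_of_lt (lintegral_mono_ae ?_) hfin
    filter_upwards [hν1] with y hy
    rw [← ofReal_norm, Real.norm_of_nonneg (by linarith)]
  have hfm : IsFiniteMeasure ν := by
    refine ⟨lt_of_le_of_lt ?_ hfin⟩
    rw [← lintegral_one]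
    refine lintegral_mono_ae ?_
    filter_upwards [hν1] with y hy
    simpa using hy
  refine ⟨ν, hfm, hν1, ?_, hint, ?_⟩
  · intro h
    have h1 : ν Set.univ = 0 := by rw [h]; simp
    simp [ν] at h1
  · intro N
    have hev : ∀ᶠ s in atTop, ∀ n ∈ Finset.range N, a n ≤ s :=
      (Filter.eventually_all_finset _).2 fun n _ => eventually_ge_atTop (a n)
    filter_upwards [hev] with s hs
    calc (N : ENNReal) * ρ (Set.Ioi s)
        = ∑ n ∈ Finset.range N, ρ (Set.Ioi s) := by simp
      _ = ∑ n ∈ Finset.range N, ρ.restrict (Set.Ioi (a n)) (Set.Ioi s) := by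
          refine Finset.sum_congr rfl fun n hn => ?_
          rw [Measure.restrict_apply measurableSet_Ioi,
            Set.inter_eq_left.2 (Set.Ioi_subset_Ioi (hs n hn))]
      _ ≤ ∑' n, ρ.restrict (Set.Ioi (a n)) (Set.Ioi s) := ENNReal.sum_le_tsum _
      _ = Measure.sum (fun n => ρ.restrict (Set.Ioi (a n))) (Set.Ioi s) :=
          (Measure.sum_apply _ measurableSet_Ioi).symm
      _ ≤ ν (Set.Ioi s) := by
          simp only [ν, Measure.add_apply]
          exact le_self_add

lemma assemble (ν : Measure ℝ) [IsFiniteMeasure ν] (hν : ∀ᵐ y ∂ν, 1 ≤ y) (h0 : ν ≠ 0)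
    (hi : Integrable (fun y : ℝ => y) ν) (f : ℝ → ℝ) (k : ℕ)
    (hf : f =o[atTop] (fun t : ℝ => gg ν (Real.log (1 + t)) * t ^ k)) :
    ∃ γ : ℝ → ℝ,
      (∀ t, 0 < t → 0 < γ t) ∧
      (∀ l : ℝ, 0 < l → Tendsto (fun t => γ (l * t) / γ t) atTop (nhds 1)) ∧
      AntitoneOn γ (Set.Ioi 0) ∧
      (∀ t : ℝ, 0 < t → DifferentiableAt ℝ γ t) ∧
      f =o[atTop] (fun t : ℝ => γ t * t ^ k) ∧
      IntegrableOn (fun x => γ x / x) (Set.Ioi 1) := by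
  refine ⟨fun t => gg ν (Real.log (1 + t)), ?_, ?_, ?_, ?_, hf, gg_integrable ν hν hi⟩
  · intro t ht
    exact gg_pos ν hν h0 (Real.log_pos (by linarith))
  · intro l hl
    exact gg_ratio ν hν h0 hl
  · intro x hx y hy hxy
    have hx : 0 < x := hx
    exact gg_anti ν hν (Real.log_pos (by linarith)) (Real.log_le_log (by linarith) (by linarith))
  · intro t ht
    refine DifferentiableAt.comp (g := gg ν) (f := fun t => Real.log (1 + t)) t (gg_diff ν hν _) ?_
    exact DifferentiableAt.log (by fun_prop) (by positivity)

lemma case_two {Ω : Type} [MeasurableSpace Ω] (μ : Measure Ω)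
    (X : Ω → ℝ) (hXm : Measurable X)
    (hmom : Integrable (fun ω => (X ω) ^ 2 * Real.log (1 + |X ω|)) μ) :
    ∃ ν : Measure ℝ, IsFiniteMeasure ν ∧ (∀ᵐ y ∂ν, 1 ≤ y) ∧ ν ≠ 0 ∧
      Integrable (fun y : ℝ => y) ν ∧
      (fun t : ℝ => ∫ ω in {ω | t < |X ω|}, |X ω| ^ 2 ∂μ)
        =o[atTop] (fun t : ℝ => gg ν (Real.log (1 + t)) * t ^ 0) := by
  have hXa : Measurable (fun ω => |X ω|) := by simpa [Real.norm_eq_abs] using hXm.norm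
  set Y : Ω → ℝ := fun ω => Real.log (1 + |X ω|)
  have hY : Measurable Y := Real.measurable_log.comp (hXa.const_add 1)
  set d : Ω → ENNReal := fun ω => ENNReal.ofReal (|X ω| ^ 2)
  have hd : Measurable d := (hXa.pow_const 2).ennreal_ofReal
  set ρ := (μ.withDensity d).map Y
  have hρ : ∫⁻ y, ENNReal.ofReal y ∂ρ ≠ ⊤ := by
    rw [lintegral_map (by fun_prop) hY, lintegral_withDensity_eq_lintegral_mul _ hd (by fun_prop)]
    refine ne_of_lt (lt_of_le_of_lt (lintegral_mono fun ω => ?_) hmom.2)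
    simp only [Pi.mul_apply, d, Y]
    rw [← ENNReal.ofReal_mul (by positivity), sq_abs]
    exact Real.ofReal_le_enorm _
  obtain ⟨ν, h1, h2, h3, h4, h5⟩ := exists_nu ρ hρ
  refine ⟨ν, h1, h2, h3, h4, ?_⟩
  have hlog : Tendsto (fun t : ℝ => Real.log (1 + t)) atTop atTop :=
    Real.tendsto_log_atTop.comp (tendsto_atTop_add_const_left _ _ tendsto_id)
  rw [Asymptotics.isLittleO_iff]
  intro c hc
  obtain ⟨N, hN⟩ := exists_nat_gt (2 / c)
  have hNpos : 0 < (N : ℝ) := lt_trans (by positivity) hN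
  filter_upwards [hlog.eventually (h5 N), eventually_gt_atTop 0] with t ht ht0
  have hs : 0 < Real.log (1 + t) := Real.log_pos (by linarith)
  have hset : Y ⁻¹' (Set.Ioi (Real.log (1 + t))) = {ω | t < |X ω|} := by
    ext ω
    have := abs_nonneg (X ω)
    simp only [Set.mem_preimage, Set.mem_Ioi, Set.mem_ofPred_eq, Y]
    rw [Real.log_lt_log_iff (by linarith) (by linarith)]
    constructor <;> intro h <;> linarith
  have hms : MeasurableSet {ω | t < |X ω|} := measurableSet_lt measurable_const hXa
  have hint : ∫ ω in {ω | t < |X ω|}, |X ω| ^ 2 ∂μ = (ρ (Set.Ioi (Real.log (1 + t)))).toReal := by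
    rw [Measure.map_apply hY measurableSet_Ioi, hset, withDensity_apply _ hms,
      integral_eq_lintegral_of_nonneg_ae (Eventually.of_forall fun ω => by positivity)
        (hXa.pow_const 2).aestronglyMeasurable]
  have hgl := gg_lower ν hs
  have hreal := ENNReal.toReal_mono (measure_ne_top ν _) ht
  rw [ENNReal.toReal_mul, ENNReal.toReal_natCast] at hreal
  have hg0 := gg_pos ν h2 h3 hs
  simp only [pow_zero, mul_one]
  rw [hint, Real.norm_of_nonneg ENNReal.toReal_nonneg, Real.norm_of_nonneg hg0.le]
  have hcN : 2 < c * N := by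
    rw [div_lt_iff₀ hc] at hN
    linarith
  have hR : 0 ≤ (ρ (Set.Ioi (Real.log (1 + t)))).toReal := ENNReal.toReal_nonneg
  generalize (ρ (Set.Ioi (Real.log (1 + t)))).toReal = R at *
  have q1 : (N : ℝ) * R ≤ 2 * gg ν (Real.log (1 + t)) := by linarith
  have q2 := mul_le_mul_of_nonneg_left q1 hc.le
  nlinarith

lemma case_big {Ω : Type} [MeasurableSpace Ω] (μ : Measure Ω) (r : ℕ) (hr : 2 < r)
    (X : Ω → ℝ) (hmom : Integrable (fun ω => |X ω| ^ r) μ) :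
    (fun t : ℝ => ∫ ω in {ω | t < |X ω|}, |X ω| ^ r ∂μ)
        =o[atTop] (fun t : ℝ => gg (Measure.dirac 1) (Real.log (1 + t)) * t ^ (r - 2)) := by
  have hg : ∀ s, gg (Measure.dirac 1) s = 1 / (1 + s ^ 2) := by
    intro s
    simp [gg, ker]
  have hO : (fun t : ℝ => ∫ ω in {ω | t < |X ω|}, |X ω| ^ r ∂μ) =O[atTop] (fun _ => (1 : ℝ)) := by
    refine Asymptotics.IsBigO.of_bound (∫ ω, |X ω| ^ r ∂μ) (Eventually.of_forall fun t => ?_)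
    rw [norm_one, mul_one, Real.norm_of_nonneg (integral_nonneg fun ω => by positivity)]
    exact setIntegral_le_integral hmom (Eventually.of_forall fun ω => by positivity)
  refine hO.trans_isLittleO ?_
  rw [Asymptotics.isLittleO_const_left]
  right
  refine tendsto_norm_atTop_atTop.comp ?_
  -- log (1+t) ^ 2 ≤ 16 * sqrt (1 + t)
  have hlow : ∀ t : ℝ, 1 ≤ t → Real.sqrt t / 40 ≤
      gg (Measure.dirac 1) (Real.log (1 + t)) * t ^ (r - 2) := by
    intro t ht
    rw [hg]
    have h1 : Real.log (1 + t) ≤ (1 + t) ^ (1 / 4 : ℝ) / (1 / 4) :=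
      Real.log_le_rpow_div (by linarith) (by norm_num)
    have h0 : 0 ≤ Real.log (1 + t) := Real.log_nonneg (by linarith)
    have h2 : Real.log (1 + t) ^ 2 ≤ 16 * Real.sqrt (1 + t) := by
      calc Real.log (1 + t) ^ 2 ≤ ((1 + t) ^ (1 / 4 : ℝ) / (1 / 4)) ^ 2 := by gcongr
        _ = 16 * ((1 + t) ^ (1 / 4 : ℝ)) ^ 2 := by ring
        _ = 16 * Real.sqrt (1 + t) := by
          rw [← Real.rpow_natCast, ← Real.rpow_mul (by linarith), Real.sqrt_eq_rpow]
          norm_num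
    have h3 : Real.sqrt (1 + t) ≤ 2 * Real.sqrt t := by
      rw [Real.sqrt_le_left (by positivity), mul_pow, Real.sq_sqrt (by linarith)]
      linarith
    have h4 : 1 ≤ Real.sqrt t := Real.one_le_sqrt.2 ht
    have h5 : t ≤ t ^ (r - 2) := le_self_pow₀ ht (by omega)
    have h6 : 1 / (40 * Real.sqrt t) ≤ 1 / (1 + Real.log (1 + t) ^ 2) := by
      apply one_div_le_one_div_of_le (by positivity)
      linarith
    calc Real.sqrt t / 40 = 1 / (40 * Real.sqrt t) * t := by
          have := Real.sq_sqrt (by linarith : (0 : ℝ) ≤ t)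
          field_simp
          linarith
      _ ≤ _ := by gcongr
  refine tendsto_atTop_mono' _ ?_ (Real.tendsto_sqrt_atTop.atTop_div_const (by norm_num : (0:ℝ) < 40))
  filter_upwards [eventually_ge_atTop 1] with t ht using hlow t ht

end GammaAux

/-- **Lemma 2.2 (construction of `γ`).** There exists a slowly varying, positive, monotone
decreasing, differentiable function `γ` on `(0,∞)` such that
`E[|X|^r; |X| > t] = o(γ(t) t^{r-2})` as `t → ∞` and `∫_1^∞ γ(x)/x dx < ∞`. -/
theorem stmt5
    (r : ℕ) (hr : 2 ≤ r)
    {Ω : Type} [MeasurableSpace Ω] (μ : Measure Ω) [IsProbabilityMeasure μ]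
    (X : Ω → ℝ) (hXm : Measurable X)
    (hmom2 : r = 2 → Integrable (fun ω => (X ω) ^ 2 * Real.log (1 + |X ω|)) μ)
    (hmomr : 2 < r → Integrable (fun ω => |X ω| ^ r) μ) :
    ∃ γ : ℝ → ℝ,
      (∀ t, 0 < t → 0 < γ t) ∧
      -- slowly varying
      (∀ l : ℝ, 0 < l → Tendsto (fun t => γ (l * t) / γ t) atTop (nhds 1)) ∧
      -- monotone decreasing on (0,∞)
      AntitoneOn γ (Set.Ioi 0) ∧
      -- differentiable on (0,∞)
      (∀ t : ℝ, 0 < t → DifferentiableAt ℝ γ t) ∧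
      -- E[|X|^r ; |X| > t] = o(γ(t) t^{r-2})
      (fun t : ℝ => ∫ ω in {ω | t < |X ω|}, |X ω| ^ r ∂μ)
        =o[atTop] (fun t : ℝ => γ t * t ^ (r - 2)) ∧
      -- ∫_1^∞ γ(x)/x dx < ∞
      IntegrableOn (fun x => γ x / x) (Set.Ioi 1) := by
  rcases hr.eq_or_lt with h | h
  · subst h
    obtain ⟨ν, h1, h2, h3, h4, h5⟩ := GammaAux.case_two μ X hXm (hmom2 rfl)
    exact GammaAux.assemble ν h2 h3 h4 _ _ h5
  · refine GammaAux.assemble (Measure.dirac 1) ?_ ?_ ?_ _ _ (GammaAux.case_big μ r h X (hmomr h))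
    · rw [ae_dirac_iff measurableSet_Ici]
    · exact IsProbabilityMeasure.ne_zero _
    · exact integrable_dirac (by simp)
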